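/- Let δ > (n−1)/2. Then there exists a constant C > 0 such that for every suitable function f on R^n and every x ∈ R^n, the maximal Bochner–Riesz operator satisfies the pointwise bound T^δ_* f(x) ≤ C · M f(x), where M is the Hardy–Littlewood maximal operator. -/

import Mathlib

/-!
The kernel has a radially decreasing integrable majorant when `δ > (n - 1) / 2`, and convolution
with the dilates of such a function is dominated by the maximal function.

*Decay of the kernel.* By rotation invariance the kernel at `x` is a Fourier integral in the
direction of the first coordinate. Integrating out the other `n - 1` coordinates leaves a constant
times `∫_{-1}^{1} exp (2πi|x|s) (1 - s²)^ν ds`, `ν = δ + (n - 1) / 2`. The integrand is holomorphic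
in `|Re s| < 1`, so Cauchy's theorem on `[-1, 1] × [0, 1]` moves the integral to the vertical sides
above `±1`, which are bounded by the Gamma integral `∫ y^ν exp (-2π|x|y) dy ≲ |x|^(-ν-1)`, and to
the top side, where the integrand is `O(exp (-2π|x|))`.

*Maximal function.* Since `ν + 1 = δ + (n + 1) / 2 > n`, the part of the convolution at distance
about `2^k / R` from `x` is at most a constant times `2^(k (n - ν - 1)) M f(x)`, and the geometric
series converges.
-/

open MeasureTheory Real Complex Set
open scoped ENNReal NNReal FourierTransform

noncomputable section

/-- Euclidean space `ℝⁿ`. -/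
abbrev Euc (n : ℕ) := EuclideanSpace ℝ (Fin n)

/-- The axis-parallel closed cube centered at `x₀` with side length `r`. -/
def cube {n : ℕ} (x₀ : Euc n) (r : ℝ) : Set (Euc n) :=
  {y | ∀ i, |y i - x₀ i| ≤ r / 2}

/-- The weighted measure `w(E) = ∫_E w(x) dx`. -/
def wMeasure {n : ℕ} (w : Euc n → ℝ) : Measure (Euc n) :=
  (volume : Measure (Euc n)).withDensity fun x => ENNReal.ofReal (w x)

/-- The Muckenhoupt class `A₁`: `w` is nonnegative, locally integrable, and the average of `w`
over any cube is dominated by a constant times the essential infimum of `w` over that cube. -/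
def IsA1 {n : ℕ} (w : Euc n → ℝ) : Prop :=
  (∀ x, 0 ≤ w x) ∧ LocallyIntegrable w volume ∧
    ∃ C : ℝ, 0 < C ∧ ∀ (x₀ : Euc n) (r : ℝ), 0 < r →
      (∫ x in cube x₀ r, w x) / r ^ n ≤ C * essInf w (volume.restrict (cube x₀ r))

/-- The Muckenhoupt class `A_q`, `1 < q < ∞`. -/
def IsAq {n : ℕ} (w : Euc n → ℝ) (q : ℝ) : Prop :=
  (∀ x, 0 ≤ w x) ∧ LocallyIntegrable w volume ∧
    ∃ C : ℝ, 0 < C ∧ ∀ (x₀ : Euc n) (r : ℝ), 0 < r →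
      ((∫ x in cube x₀ r, w x) / r ^ n) *
        ((∫ x in cube x₀ r, w x ^ (-1 / (q - 1))) / r ^ n) ^ (q - 1) ≤ C

/-- The critical index `q_w = inf {q > 1 : w ∈ A_q}` of a weight `w`. -/
def criticalIndex {n : ℕ} (w : Euc n → ℝ) : ℝ :=
  sInf {q : ℝ | 1 < q ∧ IsAq w q}

/-- The `L¹`-dilation `g_t(x) = t⁻ⁿ g(x / t)`. -/
def dil {n : ℕ} (g : Euc n → ℂ) (t : ℝ) (x : Euc n) : ℂ :=
  ((t ^ n)⁻¹ : ℝ) • g ((t⁻¹ : ℝ) • x)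

/-- The Bochner-Riesz kernel `φ` of order `δ`, i.e. the inverse Fourier transform of
`ξ ↦ (1 - |ξ|²)₊^δ`. -/
def brKernel (n : ℕ) (δ : ℝ) : Euc n → ℂ :=
  𝓕⁻ fun ξ : Euc n => (Complex.ofReal (((1 - ‖ξ‖ ^ 2) ⊔ 0) ^ δ))

/-- The Bochner-Riesz operator `T^δ_R f = φ_{1/R} * f` of order `δ`. -/
def brOp (n : ℕ) (δ R : ℝ) (f : Euc n → ℂ) (x : Euc n) : ℂ :=
  ∫ y, dil (brKernel n δ) R⁻¹ (x - y) * f y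

/-- The maximal Bochner-Riesz operator `T^δ_* f(x) = sup_{R > 0} |T^δ_R f(x)|`. -/
def maxBR (n : ℕ) (δ : ℝ) (f : Euc n → ℂ) (x : Euc n) : ℝ≥0∞ :=
  ⨆ (R : ℝ) (_ : 0 < R), (‖brOp n δ R f x‖₊ : ℝ≥0∞)

/-- Partial derivative in the `i`-th coordinate direction. -/
def pderiv' {n : ℕ} (i : Fin n) (f : Euc n → ℂ) : Euc n → ℂ :=
  fun x => fderiv ℝ f x (EuclideanSpace.single i 1)

/-- The multi-index partial derivative `D^α f`. -/
def mderiv {n : ℕ} (α : Fin n → ℕ) (f : Euc n → ℂ) : Euc n → ℂ :=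
  (((List.finRange n).map fun i => (pderiv' i)^[α i]).foldr (· ∘ ·) id) f

/-- The test function class
`𝒜_N = {φ ∈ 𝒮 : sup_x sup_{|α| ≤ N+1} (1+|x|)^{N+n+1} |D^α φ(x)| ≤ 1}`. -/
def inTestClass {n : ℕ} (N : ℕ) (φ : SchwartzMap (Euc n) ℂ) : Prop :=
  ∀ (x : Euc n) (α : Fin n → ℕ), (∑ i, α i) ≤ N + 1 →
    (1 + ‖x‖) ^ (N + n + 1) * ‖mderiv α (⇑φ) x‖ ≤ 1

/-- The radial grand maximal function
`G⁺ f(x) = sup_{φ ∈ 𝒜_N} sup_{t > 0} |(φ_t * f)(x)|`. -/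
def grandMax {n : ℕ} (N : ℕ) (f : Euc n → ℂ) (x : Euc n) : ℝ≥0∞ :=
  ⨆ (φ : SchwartzMap (Euc n) ℂ) (_ : inTestClass N φ) (t : ℝ) (_ : 0 < t),
    (‖∫ y, dil (⇑φ) t (x - y) * f y‖₊ : ℝ≥0∞)

/-- The weak `L^p` quasinorm `sup_{λ > 0} λ · μ({x : g(x) > λ})^{1/p}` of an
`ℝ≥0∞`-valued function with respect to the measure `μ`. -/
def weakNorm {n : ℕ} (μ : Measure (Euc n)) (p : ℝ) (g : Euc n → ℝ≥0∞) : ℝ≥0∞ :=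
  ⨆ (lam : ℝ≥0) (_ : 0 < lam), (lam : ℝ≥0∞) * μ {x | (lam : ℝ≥0∞) < g x} ^ (1 / p)

/-- The weak Hardy space quasinorm `‖f‖_{WH^p_w} = ‖G⁺ f‖_{WL^p_w}`, with grand maximal
function taken over the test class `𝒜_N`. -/
def whNorm {n : ℕ} (N : ℕ) (μ : Measure (Euc n)) (p : ℝ) (f : Euc n → ℂ) : ℝ≥0∞ :=
  weakNorm μ p (grandMax N f)

/-- The Hardy-Littlewood maximal function (over cubes containing `x`). -/
def hlMax {n : ℕ} (f : Euc n → ℂ) (x : Euc n) : ℝ≥0∞ :=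
  ⨆ (x₀ : Euc n) (r : ℝ) (_ : 0 < r) (_ : x ∈ cube x₀ r),
    (volume (cube x₀ r))⁻¹ * ∫⁻ y in cube x₀ r, (‖f y‖₊ : ℝ≥0∞)

/-! ### Decay of the one-dimensional Fourier integral -/

section OscillatoryIntegral

variable {ν r : ℝ}

theorem exp_neg_le_rpow_mul_rpow_neg {a r : ℝ} (ha : 0 ≤ a) (hr : 0 < r) :
    Real.exp (-r) ≤ a ^ a * r ^ (-a) := by
  have h : r ^ a ≤ a ^ a * Real.exp r := by
    simpa [abs_of_pos hr] using ProbabilityTheory.rpow_abs_le_mul_exp_abs r ha one_ne_zero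
  rwa [Real.exp_neg, Real.rpow_neg hr.le, ← div_eq_mul_inv, le_div_iff₀ (by positivity),
    inv_mul_le_iff₀ (Real.exp_pos r), mul_comm]

theorem integrableOn_rpow_mul_exp_neg_mul_Ioi (hν : -1 < ν) (hr : 0 < r) :
    IntegrableOn (fun y : ℝ => y ^ ν * Real.exp (-(r * y))) (Ioi 0) := by
  simpa using integrableOn_rpow_mul_exp_neg_mul_rpow hν one_pos hr

theorem integral_rpow_mul_exp_neg_mul_le (hν : -1 < ν) (hr : 0 < r) {b : ℝ} (hb : 0 ≤ b) :
    ∫ y in (0 : ℝ)..b, y ^ ν * Real.exp (-(r * y)) ≤ Real.Gamma (ν + 1) * r ^ (-(ν + 1)) := by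
  rw [intervalIntegral.integral_of_le hb]
  calc ∫ y in Ioc (0 : ℝ) b, y ^ ν * Real.exp (-(r * y))
      ≤ ∫ y in Ioi (0 : ℝ), y ^ ν * Real.exp (-(r * y)) := by
        refine setIntegral_mono_set (integrableOn_rpow_mul_exp_neg_mul_Ioi hν hr) ?_
          Ioc_subset_Ioi_self.eventuallyLE
        filter_upwards [ae_restrict_mem measurableSet_Ioi] with y hy
        exact mul_nonneg (Real.rpow_nonneg (le_of_lt hy) ν) (Real.exp_pos _).le
    _ = Real.Gamma (ν + 1) * r ^ (-(ν + 1)) := by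
        have hGamma := integral_rpow_mul_exp_neg_mul_Ioi (a := ν + 1) (by linarith) hr
        rw [add_sub_cancel_right] at hGamma
        rw [hGamma, one_div, Real.inv_rpow hr.le, Real.rpow_neg hr.le, mul_comm]

/-- The holomorphic extension to `|Re z| < 1` of the integrand `exp (i r s) (1 - s²) ^ ν` of the
one-dimensional Fourier integral. There `1 - z²` avoids the negative real axis, so the principal
branch of the power is the right one. -/
def oscIntegrand (ν r : ℝ) (z : ℂ) : ℂ :=
  cexp (r * z * I) * (1 - z ^ 2) ^ (ν : ℂ)

theorem one_sub_sq_re (z : ℂ) : (1 - z ^ 2).re = 1 - z.re ^ 2 + z.im ^ 2 := by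
  simp only [pow_two, sub_re, one_re, mul_re]
  ring

theorem continuousAt_oscIntegrand (hν : 0 < ν) (r : ℝ) {z : ℂ} (hz : |z.re| ≤ 1) :
    ContinuousAt (oscIntegrand ν r) z := by
  have hre : 0 ≤ (1 - z ^ 2).re := by
    rw [one_sub_sq_re]
    linarith [(sq_le_one_iff_abs_le_one _).2 hz, sq_nonneg z.im]
  have hpow : ContinuousAt (fun w : ℂ => w ^ (ν : ℂ)) (1 - z ^ 2) :=
    continuousAt_cpow_const_of_re_pos (Or.inl hre) (by simpa using hν)
  exact ContinuousAt.mul (by fun_prop)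
    (ContinuousAt.comp (f := fun z : ℂ => 1 - z ^ 2) hpow (by fun_prop))

theorem differentiableAt_oscIntegrand (ν r : ℝ) {z : ℂ} (hz : |z.re| < 1) :
    DifferentiableAt ℂ (oscIntegrand ν r) z := by
  have hre : 0 < (1 - z ^ 2).re := by
    rw [one_sub_sq_re]
    linarith [(sq_lt_one_iff_abs_lt_one _).2 hz, sq_nonneg z.im]
  exact DifferentiableAt.mul (by fun_prop)
    (DifferentiableAt.cpow_const (by fun_prop) (Or.inl hre))

theorem norm_oscIntegrand (ν r : ℝ) (z : ℂ) :
    ‖oscIntegrand ν r z‖ = Real.exp (-(r * z.im)) * ‖1 - z ^ 2‖ ^ ν := by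
  rw [oscIntegrand, norm_mul, norm_exp, norm_cpow_real]
  simp

theorem oscIntegrand_ofReal (ν r : ℝ) {s : ℝ} (hs : |s| ≤ 1) :
    oscIntegrand ν r s = cexp (r * s * I) * ((1 - s ^ 2) ^ ν : ℝ) := by
  rw [oscIntegrand, ofReal_cpow (by linarith [(sq_le_one_iff_abs_le_one _).2 hs])]
  push_cast
  rfl

theorem integral_oscIntegrand_eq_of_pos (hν : 0 < ν) (r : ℝ) :
    ∫ s in (-1 : ℝ)..1, oscIntegrand ν r s =
      (∫ s in (-1 : ℝ)..1, oscIntegrand ν r (s + I)) -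
        I * (∫ y in (0 : ℝ)..1, oscIntegrand ν r (1 + y * I)) +
        I * ∫ y in (0 : ℝ)..1, oscIntegrand ν r (-1 + y * I) := by
  have hcont : ContinuousOn (oscIntegrand ν r) (uIcc (-1 : ℝ) 1 ×ℂ uIcc (0 : ℝ) 1) := by
    intro z hz
    rw [mem_reProdIm, uIcc_of_le (by norm_num)] at hz
    exact (continuousAt_oscIntegrand hν r (abs_le.2 hz.1)).continuousWithinAt
  have hdiff : DifferentiableOn ℂ (oscIntegrand ν r)
      (Ioo (min (-1 : ℝ) 1) (max (-1 : ℝ) 1) ×ℂ Ioo (min (0 : ℝ) 1) (max (0 : ℝ) 1)) := by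
    intro z hz
    rw [mem_reProdIm, min_eq_left (by norm_num), max_eq_right (by norm_num)] at hz
    exact (differentiableAt_oscIntegrand ν r (abs_lt.2 hz.1)).differentiableWithinAt
  have hrect := integral_boundary_rect_eq_zero_of_continuousOn_of_differentiableOn
    (oscIntegrand ν r) (-1) (1 + I) (by simpa using hcont) (by simpa using hdiff)
  simp only [neg_re, one_re, add_re, I_re, add_zero, neg_im, one_im, neg_zero, add_im, I_im,
    zero_add, ofReal_zero, zero_mul, ofReal_one, one_mul, ofReal_neg, smul_eq_mul] at hrect
  linear_combination hrect

theorem norm_integral_oscIntegrand_add_I_le (hν : 0 ≤ ν) (r : ℝ) :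
    ‖∫ s in (-1 : ℝ)..1, oscIntegrand ν r (s + I)‖ ≤ 2 * 5 ^ ν * Real.exp (-r) := by
  have hpt : ∀ s ∈ uIoc (-1 : ℝ) 1, ‖oscIntegrand ν r (s + I)‖ ≤ Real.exp (-r) * 5 ^ ν := by
    intro s hs
    rw [uIoc_of_le (by norm_num)] at hs
    have hsI : ‖(s : ℂ) + I‖ ≤ 1 + 1 := by
      refine (norm_add_le _ _).trans (add_le_add ?_ norm_I.le)
      simpa using abs_le.2 ⟨hs.1.le, hs.2⟩
    have hbase : ‖1 - ((s : ℂ) + I) ^ 2‖ ≤ 5 :=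
      calc ‖1 - ((s : ℂ) + I) ^ 2‖ ≤ ‖(1 : ℂ)‖ + ‖(s : ℂ) + I‖ ^ 2 := by
            rw [← norm_pow]
            exact norm_sub_le _ _
        _ ≤ 1 + (1 + 1) ^ 2 := by
            rw [norm_one]
            gcongr
        _ = 5 := by norm_num
    rw [norm_oscIntegrand]
    simp only [add_im, ofReal_im, I_im, zero_add, mul_one]
    gcongr
  calc ‖∫ s in (-1 : ℝ)..1, oscIntegrand ν r (s + I)‖
      ≤ Real.exp (-r) * 5 ^ ν * |1 - (-1 : ℝ)| :=
        intervalIntegral.norm_integral_le_of_norm_le_const hpt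
    _ = 2 * 5 ^ ν * Real.exp (-r) := by norm_num; ring

theorem norm_oscIntegrand_add_mul_I_le (hν : 0 ≤ ν) (r : ℝ) {ε y : ℝ} (hε : ε ^ 2 = 1)
    (hy : y ∈ Icc 0 1) :
    ‖oscIntegrand ν r (ε + y * I)‖ ≤ 3 ^ ν * (y ^ ν * Real.exp (-(r * y))) := by
  have hfactor : 1 - ((ε : ℂ) + y * I) ^ 2 = y * (y - 2 * ε * I) := by
    have hε' : (ε : ℂ) ^ 2 = 1 := mod_cast hε
    linear_combination -hε' - (y : ℂ) ^ 2 * I_sq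
  have hnorm : ‖(y : ℂ) - 2 * ε * I‖ ≤ 3 := by
    refine (norm_sub_le _ _).trans ?_
    have habs : |ε| = 1 := (sq_eq_sq₀ (abs_nonneg ε) zero_le_one).1 (by rw [sq_abs, hε, one_pow])
    simp only [norm_mul, norm_real, Real.norm_eq_abs, norm_I, Complex.norm_two, habs,
      abs_of_nonneg hy.1]
    linarith [hy.2]
  have hbase : ‖1 - ((ε : ℂ) + y * I) ^ 2‖ ≤ 3 * y := by
    rw [hfactor, norm_mul, norm_real, Real.norm_of_nonneg hy.1, mul_comm]
    exact mul_le_mul_of_nonneg_right hnorm hy.1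
  calc ‖oscIntegrand ν r (ε + y * I)‖
      = Real.exp (-(r * y)) * ‖1 - ((ε : ℂ) + y * I) ^ 2‖ ^ ν := by
        rw [norm_oscIntegrand]
        simp
    _ ≤ Real.exp (-(r * y)) * (3 * y) ^ ν := by gcongr
    _ = 3 ^ ν * (y ^ ν * Real.exp (-(r * y))) := by
        rw [Real.mul_rpow (by norm_num) hy.1]
        ring

theorem norm_integral_oscIntegrand_add_mul_I_le (hν : 0 ≤ ν) (hr : 0 < r) {ε : ℝ}
    (hε : ε ^ 2 = 1) :
    ‖∫ y in (0 : ℝ)..1, oscIntegrand ν r (ε + y * I)‖ ≤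
      3 ^ ν * Real.Gamma (ν + 1) * r ^ (-(ν + 1)) := by
  have hint : IntervalIntegrable (fun y : ℝ => 3 ^ ν * (y ^ ν * Real.exp (-(r * y))))
      volume 0 1 := by
    rw [intervalIntegrable_iff_integrableOn_Ioc_of_le zero_le_one]
    exact ((integrableOn_rpow_mul_exp_neg_mul_Ioi (by linarith) hr).mono_set
      Ioc_subset_Ioi_self).const_mul _
  calc ‖∫ y in (0 : ℝ)..1, oscIntegrand ν r (ε + y * I)‖
      ≤ ∫ y in (0 : ℝ)..1, 3 ^ ν * (y ^ ν * Real.exp (-(r * y))) :=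
        intervalIntegral.norm_integral_le_of_norm_le zero_le_one
          (.of_forall fun y hy => norm_oscIntegrand_add_mul_I_le hν r hε (Ioc_subset_Icc_self hy))
          hint
    _ = 3 ^ ν * ∫ y in (0 : ℝ)..1, y ^ ν * Real.exp (-(r * y)) :=
        intervalIntegral.integral_const_mul _ _
    _ ≤ 3 ^ ν * (Real.Gamma (ν + 1) * r ^ (-(ν + 1))) := by
        gcongr
        exact integral_rpow_mul_exp_neg_mul_le (by linarith) hr zero_le_one
    _ = 3 ^ ν * Real.Gamma (ν + 1) * r ^ (-(ν + 1)) := (mul_assoc _ _ _).symm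

theorem exists_norm_integral_oscIntegrand_le (hν : 0 < ν) :
    ∃ A : ℝ, ∀ r : ℝ, 0 < r →
      ‖∫ s in (-1 : ℝ)..1, oscIntegrand ν r s‖ ≤ A * r ^ (-(ν + 1)) := by
  refine ⟨2 * 5 ^ ν * (ν + 1) ^ (ν + 1) + 2 * (3 ^ ν * Real.Gamma (ν + 1)), fun r hr => ?_⟩
  have htop : ‖∫ s in (-1 : ℝ)..1, oscIntegrand ν r (s + I)‖ ≤
      2 * 5 ^ ν * ((ν + 1) ^ (ν + 1) * r ^ (-(ν + 1))) := by
    refine (norm_integral_oscIntegrand_add_I_le hν.le r).trans ?_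
    gcongr
    exact exp_neg_le_rpow_mul_rpow_neg (by linarith) hr
  have hright := norm_integral_oscIntegrand_add_mul_I_le hν.le hr (ε := 1) (by norm_num)
  have hleft := norm_integral_oscIntegrand_add_mul_I_le hν.le hr (ε := -1) (by norm_num)
  rw [ofReal_one] at hright
  rw [ofReal_neg, ofReal_one] at hleft
  rw [integral_oscIntegrand_eq_of_pos hν]
  refine (norm_add_le _ _).trans ((add_le_add_left (norm_sub_le _ _) _).trans ?_)
  rw [norm_mul, norm_mul, norm_I, one_mul, one_mul]
  linarith

end OscillatoryIntegral

/-! ### Fourier transforms of radial functions -/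

section RadialFourier

open Module

variable {E F V : Type*}
  [NormedAddCommGroup E] [InnerProductSpace ℝ E] [FiniteDimensional ℝ E]
  [NormedAddCommGroup F] [InnerProductSpace ℝ F] [FiniteDimensional ℝ F]
  [NormedAddCommGroup V] [NormedSpace ℂ V]

theorem exists_linearIsometryEquiv_apply_eq (h : finrank ℝ E = finrank ℝ F) {x : E} {y : F}
    (hxy : ‖x‖ = ‖y‖) : ∃ L : E ≃ₗᵢ[ℝ] F, L x = y := by
  let L₀ : E ≃ₗᵢ[ℝ] F :=
    (stdOrthonormalBasis ℝ E).equiv (stdOrthonormalBasis ℝ F) (finCongr h)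
  refine ⟨L₀.trans (ℝ ∙ (L₀ x - y))ᗮ.reflection, ?_⟩
  exact Submodule.reflection_sub (by rw [L₀.norm_map, hxy])

variable [MeasurableSpace E] [BorelSpace E] [MeasurableSpace F] [BorelSpace F]

theorem norm_fourierInv_le_integral_norm (f : E → V) (x : E) : ‖𝓕⁻ f x‖ ≤ ∫ ξ, ‖f ξ‖ :=
  VectorFourier.norm_fourierIntegral_le_integral_norm _ _ _ _ _

theorem fourierInv_toLp_zero_right {f : WithLp 2 (E × F) → V} (hf : Integrable f) (u : E) :
    𝓕⁻ f (WithLp.toLp 2 (u, 0)) = 𝓕⁻ (fun s => ∫ y, f (WithLp.toLp 2 (s, y))) u := by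
  have hpres := WithLp.volume_preserving_toLp E F
  have hemb : MeasurableEmbedding (WithLp.toLp 2 : E × F → WithLp 2 (E × F)) :=
    (MeasurableEquiv.toLp 2 (E × F)).measurableEmbedding
  have hint : Integrable fun p : E × F =>
      cexp (↑(2 * π * inner ℝ p.1 u) * I) • f (WithLp.toLp 2 p) := by
    refine ((hpres.integrable_comp_emb hemb).2 hf).bdd_smul (1 : ℝ)
      (Continuous.aestronglyMeasurable (by fun_prop)) (.of_forall fun p => ?_)
    rw [norm_exp_ofReal_mul_I]
  rw [Real.fourierInv_eq', Real.fourierInv_eq', ← hpres.integral_comp hemb]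
  simp only [WithLp.prod_inner_apply, inner_zero_right, add_zero]
  rw [Measure.volume_eq_prod, integral_prod _ hint]
  simp only [integral_smul]

theorem fourierInv_radial_eq (h : finrank ℝ E = finrank ℝ F + 1) {g : ℝ → V}
    (hg : Integrable fun ξ : E => g (‖ξ‖ ^ 2)) (x : E) :
    𝓕⁻ (fun ξ : E => g (‖ξ‖ ^ 2)) x =
      𝓕⁻ (fun s : ℝ => ∫ y : F, g (‖s‖ ^ 2 + ‖y‖ ^ 2)) ‖x‖ := by
  have hrank : finrank ℝ (WithLp 2 (ℝ × F)) = finrank ℝ E := by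
    rw [(WithLp.linearEquiv 2 ℝ (ℝ × F)).finrank_eq, finrank_prod, finrank_self, h, add_comm]
  have hnorm : ‖(WithLp.toLp 2 (‖x‖, 0) : WithLp 2 (ℝ × F))‖ = ‖x‖ := by simp
  obtain ⟨L, hL⟩ := exists_linearIsometryEquiv_apply_eq hrank hnorm
  have hcomp : (fun ξ : E => g (‖ξ‖ ^ 2)) ∘ L = fun p => g (‖p‖ ^ 2) := by
    ext p
    simp
  have hint : Integrable fun p : WithLp 2 (ℝ × F) => g (‖p‖ ^ 2) := by
    rw [← hcomp]
    exact (L.measurePreserving.integrable_comp_emb L.toHomeomorph.measurableEmbedding).2 hg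
  calc 𝓕⁻ (fun ξ : E => g (‖ξ‖ ^ 2)) x
      = 𝓕⁻ (fun p : WithLp 2 (ℝ × F) => g (‖p‖ ^ 2)) (WithLp.toLp 2 (‖x‖, 0)) := by
        rw [← hcomp, Real.fourierInv_comp_linearIsometry, hL]
    _ = 𝓕⁻ (fun s : ℝ => ∫ y : F, g (‖s‖ ^ 2 + ‖y‖ ^ 2)) ‖x‖ := by
        rw [fourierInv_toLp_zero_right hint]
        simp only [WithLp.prod_norm_sq_eq_of_L2, WithLp.toLp_fst, WithLp.toLp_snd]

end RadialFourier

/-! ### The Bochner-Riesz multiplier -/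

section Multiplier

open Module

/-- The Bochner-Riesz multiplier `(1 - ‖ξ‖²)₊ ^ δ` on a normed space, whose inverse Fourier
transform on `ℝⁿ` is the Bochner-Riesz kernel. It is needed on `ℝ` and on hyperplanes as well. -/
def brMultiplier {E : Type*} [NormedAddCommGroup E] (δ : ℝ) (ξ : E) : ℂ :=
  (((1 - ‖ξ‖ ^ 2) ⊔ 0) ^ δ : ℝ)

theorem integral_posPart_sub_norm_sq_rpow {F : Type*} [NormedAddCommGroup F] [NormedSpace ℝ F]
    [FiniteDimensional ℝ F] [MeasurableSpace F] [BorelSpace F] (μ : Measure F) [μ.IsAddHaarMeasure]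
    {δ : ℝ} (hδ : 0 < δ) (c : ℝ) :
    ∫ y, ((c - ‖y‖ ^ 2) ⊔ 0) ^ δ ∂μ =
      (c ⊔ 0) ^ (δ + finrank ℝ F / 2) * ∫ y, ((1 - ‖y‖ ^ 2) ⊔ 0) ^ δ ∂μ := by
  rcases le_or_gt c 0 with hc | hc
  · have hzero : ∀ y : F, ((c - ‖y‖ ^ 2) ⊔ 0) ^ δ = 0 := fun y => by
      rw [max_eq_right (by linarith [sq_nonneg ‖y‖]), Real.zero_rpow hδ.ne']
    have hexp : δ + finrank ℝ F / 2 ≠ 0 := by positivity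
    simp only [hzero, integral_zero, max_eq_right hc, Real.zero_rpow hexp, zero_mul]
  · have hscale := Measure.integral_comp_smul μ (fun y : F => ((c - ‖y‖ ^ 2) ⊔ 0) ^ δ) √c
    have hpt : ∀ y : F, ((c - ‖√c • y‖ ^ 2) ⊔ 0) ^ δ = c ^ δ * ((1 - ‖y‖ ^ 2) ⊔ 0) ^ δ := by
      intro y
      rw [← Real.mul_rpow hc.le le_sup_right, mul_max_of_nonneg _ _ hc.le, mul_zero, norm_smul,
        mul_pow, Real.norm_eq_abs, sq_abs, Real.sq_sqrt hc.le, mul_sub, mul_one]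
    have hpow : √c ^ finrank ℝ F = c ^ ((finrank ℝ F : ℝ) / 2) := by
      rw [Real.sqrt_eq_rpow, ← Real.rpow_natCast, ← Real.rpow_mul hc.le]
      ring_nf
    simp only [hpt, integral_const_mul, hpow, smul_eq_mul] at hscale
    rw [abs_of_pos (by positivity), inv_mul_eq_div, eq_div_iff (by positivity)] at hscale
    rw [← hscale, max_eq_left hc.le, Real.rpow_add hc]
    ring

variable {E F : Type*}
  [NormedAddCommGroup E] [InnerProductSpace ℝ E] [FiniteDimensional ℝ E]
  [MeasurableSpace E] [BorelSpace E]
  [NormedAddCommGroup F] [InnerProductSpace ℝ F] [FiniteDimensional ℝ F]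
  [MeasurableSpace F] [BorelSpace F]

theorem integrable_brMultiplier {δ : ℝ} (hδ : 0 < δ) :
    Integrable (brMultiplier δ : E → ℂ) := by
  refine Continuous.integrable_of_hasCompactSupport ?_ ?_
  · exact continuous_ofReal.comp
      (Continuous.rpow_const (by fun_prop) fun _ => Or.inr hδ.le)
  · refine HasCompactSupport.intro (isCompact_closedBall (0 : E) 1) fun ξ hξ => ?_
    have hnorm : 1 < ‖ξ‖ := by simpa using hξ
    rw [brMultiplier, max_eq_right (by nlinarith), Real.zero_rpow hδ.ne', ofReal_zero]

theorem fourierInv_brMultiplier_eq {δ : ℝ} (hδ : 0 < δ) (h : finrank ℝ E = finrank ℝ F + 1)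
    (x : E) :
    𝓕⁻ (brMultiplier δ : E → ℂ) x =
      𝓕⁻ (brMultiplier (δ + finrank ℝ F / 2) : ℝ → ℂ) ‖x‖ * ∫ y : F, brMultiplier δ y := by
  have hslice : ∀ s : ℝ, ∫ y : F, ((((1 - (‖s‖ ^ 2 + ‖y‖ ^ 2)) ⊔ 0) ^ δ : ℝ) : ℂ) =
      brMultiplier (δ + finrank ℝ F / 2) s * ∫ y : F, brMultiplier δ y := by
    intro s
    simp only [brMultiplier, integral_complex_ofReal, ← sub_sub]
    rw [integral_posPart_sub_norm_sq_rpow _ hδ]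
    push_cast
    rfl
  calc 𝓕⁻ (brMultiplier δ : E → ℂ) x
      = 𝓕⁻ (fun s : ℝ => ∫ y : F, ((((1 - (‖s‖ ^ 2 + ‖y‖ ^ 2)) ⊔ 0) ^ δ : ℝ) : ℂ)) ‖x‖ :=
        fourierInv_radial_eq (g := fun t => ((((1 - t) ⊔ 0) ^ δ : ℝ) : ℂ)) h
          (integrable_brMultiplier hδ) x
    _ = 𝓕⁻ (brMultiplier (δ + finrank ℝ F / 2) : ℝ → ℂ) ‖x‖ * ∫ y : F, brMultiplier δ y := by
        simp only [hslice, Real.fourierInv_eq', smul_eq_mul, ← mul_assoc, integral_mul_const]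

theorem fourierInv_brMultiplier_real {ν : ℝ} (hν : 0 < ν) (t : ℝ) :
    𝓕⁻ (brMultiplier ν : ℝ → ℂ) t = ∫ s in (-1 : ℝ)..1, oscIntegrand ν (2 * π * t) s := by
  rw [Real.fourierInv_eq', intervalIntegral.integral_of_le (by norm_num),
    ← integral_indicator measurableSet_Ioc]
  congr 1 with s
  by_cases hs : s ∈ Ioc (-1 : ℝ) 1
  · have hs' : |s| ≤ 1 := abs_le.2 ⟨hs.1.le, hs.2⟩
    have hpos : 0 ≤ 1 - s ^ 2 := by linarith [(sq_le_one_iff_abs_le_one s).2 hs']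
    rw [indicator_of_mem hs, oscIntegrand_ofReal ν _ hs', brMultiplier, Real.norm_eq_abs, sq_abs,
      max_eq_left hpos, smul_eq_mul]
    congr 2
    simp
    ring
  · have hneg : 1 - s ^ 2 ≤ 0 := by
      by_contra! hlt
      exact hs (Ioo_subset_Ioc_self (abs_lt.1 ((sq_lt_one_iff_abs_lt_one s).1 (by linarith))))
    rw [indicator_of_notMem hs, brMultiplier, Real.norm_eq_abs, sq_abs, max_eq_right hneg,
      Real.zero_rpow hν.ne', ofReal_zero, smul_zero]

theorem exists_norm_fourierInv_brMultiplier_real_le {ν : ℝ} (hν : 0 < ν) :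
    ∃ A : ℝ, ∀ t : ℝ, 0 < t → ‖𝓕⁻ (brMultiplier ν : ℝ → ℂ) t‖ ≤ A * t ^ (-(ν + 1)) := by
  obtain ⟨A, hA⟩ := exists_norm_integral_oscIntegrand_le hν
  refine ⟨A * (2 * π) ^ (-(ν + 1)), fun t ht => ?_⟩
  rw [fourierInv_brMultiplier_real hν, mul_assoc A, ← Real.mul_rpow two_pi_pos.le ht.le]
  exact hA _ (mul_pos two_pi_pos ht)

theorem exists_norm_fourierInv_brMultiplier_le {δ : ℝ} (hδ : 0 < δ) :
    ∃ A : ℝ, ∀ x : E, x ≠ 0 →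
      ‖𝓕⁻ (brMultiplier δ : E → ℂ) x‖ ≤ A * ‖x‖ ^ (-(δ + (finrank ℝ E + 1) / 2)) := by
  rcases subsingleton_or_nontrivial E with _ | _
  · exact ⟨0, fun x hx => absurd (Subsingleton.elim x 0) hx⟩
  obtain ⟨m, hm⟩ := Nat.exists_eq_succ_of_ne_zero (finrank_pos (R := ℝ) (M := E)).ne'
  have hrank : finrank ℝ E = finrank ℝ (Euc m) + 1 := by rw [hm, finrank_euclideanSpace_fin]
  obtain ⟨A, hA⟩ := exists_norm_fourierInv_brMultiplier_real_le
    (show 0 < δ + finrank ℝ (Euc m) / 2 by positivity)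
  refine ⟨A * ‖∫ y : Euc m, brMultiplier δ y‖, fun x hx => ?_⟩
  have hexp : δ + ((finrank ℝ E : ℝ) + 1) / 2 = δ + finrank ℝ (Euc m) / 2 + 1 := by
    rw [hrank]
    push_cast
    ring
  rw [fourierInv_brMultiplier_eq hδ hrank, norm_mul, mul_right_comm, hexp]
  gcongr
  exact hA _ (norm_pos_iff.2 hx)

theorem norm_le_mul_one_add_norm_rpow_neg {X V : Type*} [SeminormedAddCommGroup X]
    [SeminormedAddCommGroup V] {φ : X → V} {A B a : ℝ} (ha : 0 ≤ a) (hB : ∀ x, ‖φ x‖ ≤ B)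
    (hA : ∀ x, 1 ≤ ‖x‖ → ‖φ x‖ ≤ A * ‖x‖ ^ (-a)) (x : X) :
    ‖φ x‖ ≤ max A B * 2 ^ a * (1 + ‖x‖) ^ (-a) := by
  have hM : 0 ≤ max A B := ((norm_nonneg _).trans (hB 0)).trans (le_max_right A B)
  have hmax : ‖φ x‖ ≤ max A B * (max 1 ‖x‖) ^ (-a) := by
    rcases le_total ‖x‖ 1 with hx | hx
    · rw [max_eq_left hx, Real.one_rpow, mul_one]
      exact (hB x).trans (le_max_right A B)
    · rw [max_eq_right hx]
      exact (hA x hx).trans (by gcongr; exact le_max_left A B)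
  have hadd : 1 + ‖x‖ ≤ 2 * max 1 ‖x‖ := by linarith [le_max_left 1 ‖x‖, le_max_right 1 ‖x‖]
  calc ‖φ x‖ ≤ max A B * (max 1 ‖x‖) ^ (-a) := hmax
    _ = max A B * 2 ^ a * (2 * max 1 ‖x‖) ^ (-a) := by
        rw [Real.mul_rpow two_pos.le (by positivity), Real.rpow_neg two_pos.le]
        field_simp
    _ ≤ max A B * 2 ^ a * (1 + ‖x‖) ^ (-a) := by
        gcongr 1
        exact Real.rpow_le_rpow_of_nonpos (by positivity) hadd (by linarith)

theorem exists_norm_brKernel_le {n : ℕ} {δ : ℝ} (hδ : ((n : ℝ) - 1) / 2 < δ) :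
    ∃ A : ℝ, ∀ x, ‖brKernel n δ x‖ ≤ A * (1 + ‖x‖) ^ (-(δ + (n + 1) / 2)) := by
  have hbdd : ∀ x, ‖brKernel n δ x‖ ≤ ∫ ξ : Euc n, ‖brMultiplier δ ξ‖ :=
    norm_fourierInv_le_integral_norm _
  have hdecay : ∃ A : ℝ, ∀ x : Euc n, 1 ≤ ‖x‖ →
      ‖brKernel n δ x‖ ≤ A * ‖x‖ ^ (-(δ + (n + 1) / 2)) := by
    rcases n.eq_zero_or_pos with rfl | hn
    · refine ⟨0, fun x hx => ?_⟩
      rw [Subsingleton.elim x 0, norm_zero] at hx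
      linarith
    · have hn' : (1 : ℝ) ≤ n := mod_cast hn
      obtain ⟨A, hA⟩ := exists_norm_fourierInv_brMultiplier_le (E := Euc n)
        (show 0 < δ by linarith)
      rw [finrank_euclideanSpace_fin] at hA
      exact ⟨A, fun x hx => hA x (norm_pos_iff.1 (by linarith))⟩
  obtain ⟨A, hA⟩ := hdecay
  exact ⟨_, norm_le_mul_one_add_norm_rpow_neg
    (by linarith [n.cast_nonneg (α := ℝ)]) hbdd hA⟩

end Multiplier

/-! ### Domination by the maximal function -/

section Domination

variable {n : ℕ}

theorem cube_eq_preimage_Icc (x₀ : Euc n) (r : ℝ) :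
    cube x₀ r = WithLp.ofLp ⁻¹' Icc (fun i => x₀ i - r / 2) (fun i => x₀ i + r / 2) := by
  ext y
  simp only [cube, mem_ofPred_eq, mem_preimage, mem_Icc, Pi.le_def, ← forall_and]
  refine forall_congr' fun i => ?_
  rw [abs_sub_comm, mem_Icc_iff_abs_le, mem_Icc]

theorem volume_cube (x₀ : Euc n) (r : ℝ) : volume (cube x₀ r) = ENNReal.ofReal r ^ n := by
  rw [cube_eq_preimage_Icc, (PiLp.volume_preserving_ofLp (Fin n)).measure_preimage
    measurableSet_Icc.nullMeasurableSet, Real.volume_Icc_pi]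
  simp only [add_sub_sub_cancel, add_halves, Finset.prod_const, Finset.card_univ, Fintype.card_fin]

theorem lintegral_cube_le_hlMax (f : Euc n → ℂ) {x x₀ : Euc n} {r : ℝ} (hr : 0 < r)
    (hx : x ∈ cube x₀ r) :
    ∫⁻ y in cube x₀ r, ‖f y‖ₑ ≤ ENNReal.ofReal r ^ n * hlMax f x := by
  have hle : (volume (cube x₀ r))⁻¹ * ∫⁻ y in cube x₀ r, ‖f y‖ₑ ≤ hlMax f x :=
    le_iSup₂_of_le x₀ r (le_iSup₂_of_le hr hx le_rfl)
  rwa [volume_cube, ENNReal.inv_mul_le_iff (pow_ne_zero _ (ENNReal.ofReal_pos.2 hr).ne')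
    (ENNReal.pow_ne_top ENNReal.ofReal_ne_top)] at hle

/-- The `k`-th dyadic shell about `x` at scale `t`, of radii comparable to `2 ^ k * t`. The `1 +`
makes the shell with `k = 0` a ball, so that the shells with `k : ℕ` cover the space. -/
def dyadicShell (x : Euc n) (t : ℝ) (k : ℕ) : Set (Euc n) :=
  {y | 1 + ‖x - y‖ / t ∈ Ico (2 ^ k) (2 ^ (k + 1))}

theorem measurableSet_dyadicShell (x : Euc n) (t : ℝ) (k : ℕ) :
    MeasurableSet (dyadicShell x t k) :=
  measurableSet_Ico.preimage (f := fun y => 1 + ‖x - y‖ / t) (by fun_prop)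

theorem iUnion_dyadicShell (x : Euc n) {t : ℝ} (ht : 0 ≤ t) : ⋃ k, dyadicShell x t k = univ :=
  iUnion_eq_univ_iff.2 fun y =>
    exists_nat_pow_near (le_add_of_nonneg_right (by positivity)) one_lt_two

theorem dyadicShell_subset_cube (x : Euc n) {t : ℝ} (ht : 0 < t) (k : ℕ) :
    dyadicShell x t k ⊆ cube x (2 ^ (k + 2) * t) := by
  intro y hy i
  have hnorm : ‖x - y‖ ≤ 2 ^ (k + 1) * t :=
    (div_le_iff₀ ht).1 (by linarith [hy.2])
  calc |y i - x i| = ‖(x - y) i‖ := abs_sub_comm _ _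
    _ ≤ ‖x - y‖ := PiLp.norm_apply_le _ i
    _ ≤ 2 ^ (k + 1) * t := hnorm
    _ = 2 ^ (k + 2) * t / 2 := by ring

variable {φ : Euc n → ℂ} {A a : ℝ}

theorem norm_dil_le_of_mem_dyadicShell (ha : 0 ≤ a) (hφ : ∀ z, ‖φ z‖ ≤ A * (1 + ‖z‖) ^ (-a))
    {x y : Euc n} {t : ℝ} (ht : 0 < t) {k : ℕ} (hy : y ∈ dyadicShell x t k) :
    ‖dil φ t (x - y)‖ ≤ (t ^ n)⁻¹ * (A * (2 ^ k) ^ (-a)) := by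
  have hA : 0 ≤ A := by simpa using (norm_nonneg _).trans (hφ 0)
  have hnorm : ‖t⁻¹ • (x - y)‖ = ‖x - y‖ / t := by
    rw [norm_smul, Real.norm_of_nonneg (by positivity), inv_mul_eq_div]
  rw [dil, norm_smul, Real.norm_of_nonneg (by positivity)]
  gcongr
  refine (hφ _).trans ?_
  rw [hnorm]
  gcongr A * ?_
  exact Real.rpow_le_rpow_of_nonpos (by positivity) hy.1 (by linarith)

theorem setLIntegral_dyadicShell_le_mul (ha : 0 ≤ a) (hφ : ∀ z, ‖φ z‖ ≤ A * (1 + ‖z‖) ^ (-a))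
    (f : Euc n → ℂ) (x : Euc n) {t : ℝ} (ht : 0 < t) (k : ℕ) :
    ∫⁻ y in dyadicShell x t k, ‖dil φ t (x - y) * f y‖ₑ ≤
      ENNReal.ofReal ((t ^ n)⁻¹ * (A * (2 ^ k) ^ (-a))) * ∫⁻ y in dyadicShell x t k, ‖f y‖ₑ := by
  rw [← lintegral_const_mul' _ _ ENNReal.ofReal_ne_top]
  refine setLIntegral_mono' (measurableSet_dyadicShell x t k) fun y hy => ?_
  rw [enorm_mul, ← ofReal_norm]
  gcongr
  exact norm_dil_le_of_mem_dyadicShell ha hφ ht hy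

theorem setLIntegral_dyadicShell_le_hlMax (ha : 0 ≤ a)
    (hφ : ∀ z, ‖φ z‖ ≤ A * (1 + ‖z‖) ^ (-a)) (f : Euc n → ℂ) (x : Euc n) {t : ℝ} (ht : 0 < t)
    (k : ℕ) :
    ∫⁻ y in dyadicShell x t k, ‖dil φ t (x - y) * f y‖ₑ ≤
      ENNReal.ofReal (A * 4 ^ n * (2 ^ (n - a)) ^ k) * hlMax f x := by
  have hA : 0 ≤ A := by simpa using (norm_nonneg _).trans (hφ 0)
  have hconst : (t ^ n)⁻¹ * (A * (2 ^ k) ^ (-a)) * (2 ^ (k + 2) * t) ^ n =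
      A * 4 ^ n * (2 ^ ((n : ℝ) - a)) ^ k := by
    have hpow : ((2 : ℝ) ^ (-a)) ^ k = (2 ^ k) ^ (-a) := Real.rpow_pow_comm two_pos.le _ _
    rw [sub_eq_add_neg, Real.rpow_add two_pos, Real.rpow_natCast, mul_pow _ _ k, hpow,
      pow_right_comm, pow_add, mul_pow, mul_pow]
    field_simp
    norm_num
  have hx : x ∈ cube x (2 ^ (k + 2) * t) := fun i => by
    rw [sub_self, abs_zero]
    positivity
  have hshell : ∫⁻ y in dyadicShell x t k, ‖f y‖ₑ ≤
      ENNReal.ofReal (2 ^ (k + 2) * t) ^ n * hlMax f x :=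
    (lintegral_mono_set (dyadicShell_subset_cube x ht k)).trans
      (lintegral_cube_le_hlMax f (by positivity) hx)
  calc ∫⁻ y in dyadicShell x t k, ‖dil φ t (x - y) * f y‖ₑ
      ≤ ENNReal.ofReal ((t ^ n)⁻¹ * (A * (2 ^ k) ^ (-a))) *
          (ENNReal.ofReal (2 ^ (k + 2) * t) ^ n * hlMax f x) :=
        (setLIntegral_dyadicShell_le_mul ha hφ f x ht k).trans (by gcongr)
    _ = ENNReal.ofReal (A * 4 ^ n * (2 ^ (n - a)) ^ k) * hlMax f x := by
        rw [← mul_assoc, ← ENNReal.ofReal_pow (by positivity),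
          ← ENNReal.ofReal_mul (by positivity), hconst]

theorem exists_lintegral_dil_mul_le_hlMax (ha : (n : ℝ) < a)
    (hφ : ∀ z, ‖φ z‖ ≤ A * (1 + ‖z‖) ^ (-a)) :
    ∃ C : ℝ≥0, 0 < C ∧ ∀ (f : Euc n → ℂ) (x : Euc n) (t : ℝ), 0 < t →
      ∫⁻ y, ‖dil φ t (x - y) * f y‖ₑ ≤ C * hlMax f x := by
  have ha₀ : 0 ≤ a := n.cast_nonneg.trans ha.le
  set K : ℝ≥0∞ := ∑' k : ℕ, ENNReal.ofReal (A * 4 ^ n * (2 ^ (n - a)) ^ k)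
  have hK_ne_top : K ≠ ∞ := by
    refine Summable.tsum_ofReal_ne_top (Summable.mul_left _ ?_)
    exact summable_geometric_of_lt_one (by positivity)
      (Real.rpow_lt_one_of_one_lt_of_neg one_lt_two (by linarith))
  have hKC : K ≤ (K.toNNReal + 1 : ℝ≥0) := by
    rw [← ENNReal.coe_toNNReal hK_ne_top]
    exact mod_cast le_self_add
  refine ⟨K.toNNReal + 1, by positivity, fun f x t ht => ?_⟩
  calc ∫⁻ y, ‖dil φ t (x - y) * f y‖ₑ
      = ∫⁻ y in ⋃ k, dyadicShell x t k, ‖dil φ t (x - y) * f y‖ₑ := by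
        rw [iUnion_dyadicShell x ht.le, setLIntegral_univ]
    _ ≤ ∑' k, ∫⁻ y in dyadicShell x t k, ‖dil φ t (x - y) * f y‖ₑ := lintegral_iUnion_le _ _
    _ ≤ ∑' k : ℕ, ENNReal.ofReal (A * 4 ^ n * (2 ^ (n - a)) ^ k) * hlMax f x :=
        ENNReal.tsum_le_tsum fun k => setLIntegral_dyadicShell_le_hlMax ha₀ hφ f x ht k
    _ = K * hlMax f x := ENNReal.tsum_mul_right
    _ ≤ (K.toNNReal + 1 : ℝ≥0) * hlMax f x := by gcongr

end Domination

/-- Let `δ > (n-1)/2`. Then there is a constant `C > 0` such that for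
every (locally integrable) function `f` on `ℝⁿ` and every `x`, the maximal Bochner-Riesz
operator satisfies `T^δ_* f(x) ≤ C · M f(x)`, where `M` is the Hardy-Littlewood maximal
operator. -/
theorem maxBochnerRiesz_le_hlMax (n : ℕ) (δ : ℝ) (hδ : ((n : ℝ) - 1) / 2 < δ) :
    ∃ C : ℝ≥0, 0 < C ∧ ∀ f : Euc n → ℂ, LocallyIntegrable f volume →
      ∀ x : Euc n, maxBR n δ f x ≤ (C : ℝ≥0∞) * hlMax f x := by
  obtain ⟨A, hkernel⟩ := exists_norm_brKernel_le hδ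
  obtain ⟨C, hC, hdom⟩ := exists_lintegral_dil_mul_le_hlMax (by linarith) hkernel
  refine ⟨C, hC, fun f _ x => iSup₂_le fun R hR => ?_⟩
  exact (enorm_integral_le_lintegral_enorm _).trans (hdom f x R⁻¹ (inv_pos.2 hR))
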